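/- Let d, r, s, r', s' be integers with d odd, d = (r² + Ns²)/4 = ((r')² + N(s')²)/4, where N > 4, gcd(r,s) = gcd(r',s') = 1, r, r' > 0, r ≡ s (mod 2), r' ≡ s' (mod 2), gcd(d, 2N) = 1. If r·s̄ ≡ r'·s̄' (mod d) (where s̄, s̄' are inverses of s, s' mod d), then r = r' and s = s'. -/

import Mathlib

/-- Let `d` be odd with `gcd(d, 2N) = 1`, `N > 4`, and suppose
`4d = r² + Ns² = r'² + Ns'²` with `gcd(r, s) = gcd(r', s') = 1`, `r, r' > 0`,
`r ≡ s (mod 2)`, `r' ≡ s' (mod 2)`. If `r·s̄ ≡ r'·s̄' (mod d)`, where `s̄, s̄'` are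
inverses of `s, s'` modulo `d`, then `r = r'` and `s = s'`. -/
theorem stmt_7 (N d r s r' s' : ℤ) (hN : 4 < N) (hd : Odd d)
    (hcop : IsCoprime d (2 * N))
    (h1 : 4 * d = r ^ 2 + N * s ^ 2) (h2 : 4 * d = r' ^ 2 + N * s' ^ 2)
    (hrs : IsCoprime r s) (hrs' : IsCoprime r' s')
    (hr : 0 < r) (hr' : 0 < r')
    (hpar : r ≡ s [ZMOD 2]) (hpar' : r' ≡ s' [ZMOD 2])
    (sb sb' : ℤ) (hsb : s * sb ≡ 1 [ZMOD d]) (hsb' : s' * sb' ≡ 1 [ZMOD d])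
    (hcong : r * sb ≡ r' * sb' [ZMOD d]) :
    r = r' ∧ s = s' := by
  have hdpos : 0 < d := by nlinarith [sq_nonneg s, pow_pos hr 2]
  have hdvd : d ∣ r * s' - r' * s := by
    have h : r' * s ≡ r * s' [ZMOD d] := calc
      r' * s = r' * s * 1 := by ring
      _ ≡ r' * s * (s' * sb') [ZMOD d] := hsb'.symm.mul_left _
      _ = s * s' * (r' * sb') := by ring
      _ ≡ s * s' * (r * sb) [ZMOD d] := hcong.symm.mul_left _
      _ = r * s' * (s * sb) := by ring
      _ ≡ r * s' * 1 [ZMOD d] := hsb.mul_left _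
      _ = r * s' := by ring
    exact h.dvd
  have hdvd2 : 2 ∣ r * s' - r' * s := by
    have h : r' * s ≡ r * s' [ZMOD 2] := calc
      r' * s ≡ s' * r [ZMOD 2] := hpar'.mul hpar.symm
      _ = r * s' := by ring
    exact h.dvd
  have hcop2 : IsCoprime d 2 := hcop.of_mul_right_left
  obtain ⟨k, hk⟩ := hcop2.mul_dvd hdvd hdvd2
  have hid : N * (r * s' - r' * s) ^ 2 + (r * r' + N * s * s') ^ 2 = 16 * d ^ 2 := by
    calc _ = (r ^ 2 + N * s ^ 2) * (r' ^ 2 + N * s' ^ 2) := by ring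
      _ = 16 * d ^ 2 := by rw [← h1, ← h2]; ring
  have hk0 : k = 0 := by
    by_contra hne
    have hk1 : 1 ≤ k ^ 2 := by have := sq_pos_of_ne_zero hne; omega
    rw [hk] at hid
    have hNk : 4 < N * k ^ 2 := by nlinarith
    nlinarith [mul_lt_mul_of_pos_left hNk (pow_pos hdpos 2), sq_nonneg (r * r' + N * s * s')]
  have heq : r * s' = r' * s := by
    rw [hk0, mul_zero] at hk
    exact sub_eq_zero.mp hk
  have hreq : r = r' :=
    Int.dvd_antisymm hr.le hr'.le (hrs.dvd_of_dvd_mul_right ⟨s', heq.symm⟩)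
      (hrs'.dvd_of_dvd_mul_right ⟨s, heq⟩)
  subst hreq
  exact ⟨rfl, (mul_left_cancel₀ hr.ne' heq).symm⟩
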